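/- Define, for s > 0 and x ∈ ℝ, (√𝔇 q_s)(x) = ∫_ℝ |θ|^{1/2}·e^{−4π²sθ²}·e^{2πixθ} dθ (a real number). For every λ > 0 there exists C > 0 such that for all δ ∈ (0,1/2] and all y ∈ ℝ, ∫_0^1 ∫_ℝ e^{−λ|z|}·|(√𝔇 q_{s+δ²})(y−z)|² dz ds ≤ C·log(1/δ)·(1+y²)^{−3/2}. -/

import Mathlib

open MeasureTheory

/-- The `1/2`-fractional derivative of the heat kernel `q_s`, defined via the Fourier
multiplier with symbol `|θ|^{1/2}` (a real number). -/
noncomputable def sqrtDheat (s x : ℝ) : ℝ :=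
  (∫ θ : ℝ, ((|θ| ^ ((1:ℝ)/2) * Real.exp (-4 * Real.pi ^ 2 * s * θ ^ 2) : ℝ) : ℂ) *
      Complex.exp ((2 * Real.pi * x * θ : ℝ) * Complex.I)).re

open Set Filter Topology

lemma integrable_sqrt_abs_mul_exp_neg_mul_sq {a : ℝ} (ha : 0 < a) :
    Integrable fun θ : ℝ => √|θ| * Real.exp (-a * θ ^ 2) := by
  have h₂ : Integrable fun θ : ℝ => θ ^ (2:ℝ) * Real.exp (-a * θ ^ 2) :=
    integrable_rpow_mul_exp_neg_mul_sq ha (by norm_num)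
  refine ((integrable_exp_neg_mul_sq ha).add h₂).mono' (by fun_prop) (ae_of_all _ fun θ => ?_)
  have hsqrt : √|θ| ≤ 1 + θ ^ 2 := by
    rw [Real.sqrt_le_left (by positivity)]
    nlinarith [sq_abs θ, sq_nonneg (|θ| - 1), sq_nonneg (θ ^ 2)]
  have hexp := Real.exp_pos (-a * θ ^ 2)
  simp only [Pi.add_apply, Real.rpow_two]
  rw [Real.norm_of_nonneg (by positivity)]
  nlinarith

lemma integrableOn_sqrtGauss_mul_cos {a : ℝ} (ha : 0 < a) (c : ℝ) :
    IntegrableOn (fun θ => √θ * Real.exp (-a * θ ^ 2) * Real.cos (θ / c)) (Ioi 0) := by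
  refine (integrable_sqrt_abs_mul_exp_neg_mul_sq ha).integrableOn.mono' (by fun_prop) ?_
  filter_upwards [ae_restrict_mem measurableSet_Ioi] with θ hθ
  rw [norm_mul, Real.norm_of_nonneg (by positivity), abs_of_pos hθ.out]
  exact mul_le_of_le_one_right (by positivity) (Real.abs_cos_le_one _)

lemma sqrtDheat_eq {s : ℝ} (hs : 0 < s) (x : ℝ) :
    sqrtDheat s x = 2 * ∫ θ in Ioi (0:ℝ),
      √θ * Real.exp (-(4 * Real.pi ^ 2 * s) * θ ^ 2) * Real.cos (2 * Real.pi * |x| * θ) := by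
  have ha : 0 < 4 * Real.pi ^ 2 * s := by positivity
  rw [← integral_comp_abs (f := fun θ => √θ * Real.exp (-(4 * Real.pi ^ 2 * s) * θ ^ 2) *
    Real.cos (2 * Real.pi * |x| * θ)), sqrtDheat]
  have hint : Integrable fun θ : ℝ =>
      ((|θ| ^ ((1:ℝ)/2) * Real.exp (-4 * Real.pi ^ 2 * s * θ ^ 2) : ℝ) : ℂ) *
      Complex.exp ((2 * Real.pi * x * θ : ℝ) * Complex.I) := by
    refine (integrable_sqrt_abs_mul_exp_neg_mul_sq ha).mono' (by fun_prop) (ae_of_all _ fun θ => ?_)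
    rw [norm_mul, Complex.norm_exp_ofReal_mul_I, mul_one, Complex.norm_real,
      Real.norm_of_nonneg (by positivity), ← Real.sqrt_eq_rpow]
    simp
  rw [← RCLike.re_eq_complex_re, ← integral_re hint]
  refine integral_congr_ae (ae_of_all _ fun θ => ?_)
  have hcos : Real.cos (2 * Real.pi * |x| * |θ|) = Real.cos (2 * Real.pi * x * θ) := by
    rw [← Real.cos_abs (2 * Real.pi * x * θ)]
    simp [abs_mul, abs_of_pos Real.pi_pos]
  simp only [RCLike.re_to_complex, Complex.re_ofReal_mul, Complex.exp_ofReal_mul_I_re, hcos,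
    sq_abs, Real.sqrt_eq_rpow]
  ring_nf

lemma exists_sq_sqrtDheat_mul_time_le :
    ∃ K : ℝ, 0 < K ∧ ∀ s > 0, ∀ x, sqrtDheat s x ^ 2 * (s * √s) ≤ K := by
  let g : ℝ := (1 / 2) * Real.Gamma (((1:ℝ) / 2 + 1) / 2)
  have hg : 0 < g := mul_pos (by norm_num) (Real.Gamma_pos_of_pos (by norm_num))
  refine ⟨4 * g ^ 2, by positivity, fun s hs x => ?_⟩
  set a := 4 * Real.pi ^ 2 * s with ha_def
  have ha : 0 < a := by positivity
  have hsa : s ≤ a := by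
    have := Real.pi_gt_three
    nlinarith [mul_pos hs hs, mul_pos (sub_pos.2 this) hs]
  have hint : ∫ θ in Ioi (0:ℝ), √θ * Real.exp (-a * θ ^ 2) = a ^ (-(3:ℝ) / 4) * g := by
    have := integral_rpow_mul_exp_neg_mul_rpow (p := 2) (q := 1 / 2) two_pos (by norm_num) ha
    simp only [Real.rpow_two, ← Real.sqrt_eq_rpow] at this
    rw [this, mul_assoc]
    norm_num [g]
  have hI : |∫ θ in Ioi (0:ℝ), √θ * Real.exp (-a * θ ^ 2) * Real.cos (2 * Real.pi * |x| * θ)|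
      ≤ a ^ (-(3:ℝ) / 4) * g := by
    rw [← hint, ← Real.norm_eq_abs]
    refine norm_integral_le_of_norm_le ?_ (ae_of_all _ fun θ => ?_)
    · refine (integrable_sqrt_abs_mul_exp_neg_mul_sq ha).integrableOn.congr_fun (fun θ hθ => ?_)
        measurableSet_Ioi
      simp only [abs_of_pos hθ.out]
    · rw [norm_mul, Real.norm_of_nonneg (by positivity)]
      exact mul_le_of_le_one_right (by positivity) (Real.abs_cos_le_one _)
  have hsq := sq_le_sq' (neg_le_of_abs_le hI) (le_of_abs_le hI)
  have hpow : (a ^ (-(3:ℝ) / 4)) ^ 2 * (a * √a) = 1 := by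
    rw [← Real.rpow_natCast, ← Real.rpow_mul ha.le, Real.sqrt_eq_rpow]
    nth_rw 2 [← Real.rpow_one a]
    rw [← Real.rpow_add ha, ← Real.rpow_add ha]
    norm_num
  have hss : s * √s ≤ a * √a := by gcongr
  rw [sqrtDheat_eq hs]
  calc _ ≤ (2 * (a ^ (-(3:ℝ) / 4) * g)) ^ 2 * (a * √a) := by
        gcongr ?_ * ?_
        rw [mul_pow, mul_pow]
        gcongr
    _ = 4 * g ^ 2 * ((a ^ (-(3:ℝ) / 4)) ^ 2 * (a * √a)) := by ring
    _ = _ := by rw [hpow, mul_one]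

lemma mul_exp_neg_le_one (u : ℝ) : u * Real.exp (-u) ≤ 1 := by
  rw [Real.exp_neg, ← div_eq_mul_inv, div_le_one (Real.exp_pos u)]
  linarith [Real.add_one_le_exp u]

lemma sq_mul_exp_neg_le_two {u : ℝ} (hu : 0 ≤ u) : u ^ 2 * Real.exp (-u) ≤ 2 := by
  rw [Real.exp_neg, ← div_eq_mul_inv, div_le_iff₀ (Real.exp_pos u)]
  linarith [Real.quadratic_le_exp_of_nonneg hu]

/-- The first derivative of `√θ * exp (-a θ ^ 2)`. -/
noncomputable def sqrtGaussDeriv (a θ : ℝ) : ℝ :=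
  (√θ)⁻¹ * (1 / 2 - 2 * (a * θ ^ 2)) * Real.exp (-a * θ ^ 2)

/-- The second derivative of `√θ * exp (-a θ ^ 2)`. -/
noncomputable def sqrtGaussDerivTwo (a θ : ℝ) : ℝ :=
  (θ * √θ)⁻¹ * (-(1 / 4) - 4 * (a * θ ^ 2) + 4 * (a * θ ^ 2) ^ 2) * Real.exp (-a * θ ^ 2)

lemma hasDerivAt_sqrtGauss (a : ℝ) {θ : ℝ} (hθ : 0 < θ) :
    HasDerivAt (fun θ => √θ * Real.exp (-a * θ ^ 2)) (sqrtGaussDeriv a θ) θ := by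
  have h := (Real.hasDerivAt_sqrt hθ.ne').mul (((hasDerivAt_pow 2 θ).const_mul (-a)).exp)
  refine h.congr_deriv ?_
  have hs : √θ ^ 2 = θ := Real.sq_sqrt hθ.le
  have hpos : 0 < √θ := Real.sqrt_pos.2 hθ
  rw [sqrtGaussDeriv]
  field_simp
  simp only [hs]
  push_cast
  ring

lemma hasDerivAt_sqrtGaussDeriv (a : ℝ) {θ : ℝ} (hθ : 0 < θ) :
    HasDerivAt (sqrtGaussDeriv a) (sqrtGaussDerivTwo a θ) θ := by
  have hpos : 0 < √θ := Real.sqrt_pos.2 hθ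
  have h := (((Real.hasDerivAt_sqrt hθ.ne').inv hpos.ne').mul
    ((((hasDerivAt_pow 2 θ).const_mul a).const_mul 2).const_sub (1 / 2))).mul
    (((hasDerivAt_pow 2 θ).const_mul (-a)).exp)
  refine h.congr_deriv ?_
  have hs : √θ ^ 2 = θ := Real.sq_sqrt hθ.le
  rw [sqrtGaussDerivTwo]
  simp only [Pi.mul_apply, Pi.inv_apply]
  field_simp
  simp only [hs]
  push_cast
  ring

lemma abs_sqrtGaussDeriv_le {a θ : ℝ} (ha : 0 < a) : |sqrtGaussDeriv a θ| ≤ 3 * (√θ)⁻¹ := by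
  have hu : 0 ≤ a * θ ^ 2 := by positivity
  have h₁ := mul_exp_neg_le_one (a * θ ^ 2)
  have h₀ : Real.exp (-(a * θ ^ 2)) ≤ 1 := Real.exp_le_one_iff.2 (by linarith)
  have he := Real.exp_pos (-(a * θ ^ 2))
  have hm := mul_nonneg hu he.le
  rw [sqrtGaussDeriv, neg_mul, mul_assoc, abs_mul, abs_of_nonneg (by positivity), mul_comm]
  gcongr
  rw [abs_le]
  constructor <;> nlinarith

lemma abs_sqrtGaussDerivTwo_le {a θ : ℝ} (ha : 0 < a) (hθ : 0 < θ) :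
    |sqrtGaussDerivTwo a θ| ≤ 8 * (θ * √θ)⁻¹ := by
  have hu : 0 ≤ a * θ ^ 2 := by positivity
  have h₁ := mul_exp_neg_le_one (a * θ ^ 2)
  have h₂ := sq_mul_exp_neg_le_two hu
  have h₀ : Real.exp (-(a * θ ^ 2)) ≤ 1 := Real.exp_le_one_iff.2 (by linarith)
  have he := Real.exp_pos (-(a * θ ^ 2))
  have hm := mul_nonneg hu he.le
  have hm₂ := mul_nonneg (sq_nonneg (a * θ ^ 2)) he.le
  rw [sqrtGaussDerivTwo, neg_mul, mul_assoc, abs_mul, abs_of_nonneg (by positivity), mul_comm]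
  gcongr
  rw [abs_le]
  constructor <;> nlinarith

lemma inv_mul_sqrt_eq_rpow {θ : ℝ} (hθ : 0 < θ) : (θ * √θ)⁻¹ = θ ^ (-(3:ℝ) / 2) := by
  rw [Real.sqrt_eq_rpow, ← Real.rpow_one_add' hθ.le (by norm_num), ← Real.rpow_neg hθ.le]
  norm_num

lemma integrableOn_sqrtGaussDerivTwo_mul {a c : ℝ} (ha : 0 < a) (hc : 0 < c) :
    IntegrableOn (fun θ => sqrtGaussDerivTwo a θ * Real.cos (θ / c)) (Ioi c) ∧
    |∫ θ in Ioi c, sqrtGaussDerivTwo a θ * Real.cos (θ / c)| ≤ 16 * (√c)⁻¹ := by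
  have hdom : IntegrableOn (fun θ : ℝ => 8 * θ ^ (-(3:ℝ) / 2)) (Ioi c) :=
    (integrableOn_Ioi_rpow_of_lt (by norm_num) hc).const_mul 8
  have hle : ∀ᵐ θ ∂volume.restrict (Ioi c),
      ‖sqrtGaussDerivTwo a θ * Real.cos (θ / c)‖ ≤ 8 * θ ^ (-(3:ℝ) / 2) := by
    filter_upwards [ae_restrict_mem measurableSet_Ioi] with θ hθ
    have hθ₀ : 0 < θ := hc.trans hθ
    rw [← inv_mul_sqrt_eq_rpow hθ₀, norm_mul]
    exact (mul_le_of_le_one_right (norm_nonneg _) (Real.abs_cos_le_one _)).trans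
      (abs_sqrtGaussDerivTwo_le ha hθ₀)
  refine ⟨hdom.mono' ?_ hle, ?_⟩
  · unfold sqrtGaussDerivTwo
    exact Measurable.aestronglyMeasurable (by fun_prop)
  · refine (norm_integral_le_of_norm_le hdom hle).trans_eq ?_
    rw [integral_const_mul, integral_Ioi_rpow_of_lt (by norm_num) hc, Real.sqrt_eq_rpow,
      ← Real.rpow_neg hc.le]
    norm_num
    ring

lemma tendsto_inv_sqrt_atTop : Tendsto (fun θ : ℝ => (√θ)⁻¹) atTop (𝓝 0) :=
  Real.tendsto_sqrt_atTop.inv_tendsto_atTop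

lemma sqrt_mul_exp_le {a θ : ℝ} (ha : 0 < a) (hθ : 1 ≤ θ) :
    √θ * Real.exp (-a * θ ^ 2) ≤ a⁻¹ * (√θ)⁻¹ := by
  have hpos : 0 < √θ := Real.sqrt_pos.2 (by linarith)
  have hs : √θ * √θ = θ := Real.mul_self_sqrt (by linarith)
  have he := Real.exp_pos (-(a * θ ^ 2))
  have hu : a * θ * Real.exp (-(a * θ ^ 2)) ≤ 1 := by
    refine le_trans ?_ (mul_exp_neg_le_one (a * θ ^ 2))
    gcongr
    nlinarith
  rw [← mul_inv, neg_mul, ← one_div, le_div_iff₀ (by positivity)]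
  calc _ = a * (√θ * √θ) * Real.exp (-(a * θ ^ 2)) := by ring
    _ ≤ 1 := by rwa [hs]

lemma integral_Ioi_sqrtGauss_mul_cos_eq {a c : ℝ} (ha : 0 < a) (hc : 0 < c) :
    ∫ θ in Ioi c, √θ * Real.exp (-a * θ ^ 2) * Real.cos (θ / c) =
      -(c * (√c * Real.exp (-a * c ^ 2) * Real.sin 1) + c ^ 2 * (sqrtGaussDeriv a c * Real.cos 1))
      - c ^ 2 * ∫ θ in Ioi c, sqrtGaussDerivTwo a θ * Real.cos (θ / c) := by
  have hint₂ := (integrableOn_sqrtGaussDerivTwo_mul ha hc).1.const_mul (c ^ 2)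
  have hint := (integrableOn_sqrtGauss_mul_cos ha c).mono_set (Ioi_subset_Ioi hc.le)
  have hderiv : ∀ θ ∈ Ici c, HasDerivAt
      (fun θ => c * (√θ * Real.exp (-a * θ ^ 2) * Real.sin (θ / c)) +
        c ^ 2 * (sqrtGaussDeriv a θ * Real.cos (θ / c)))
      (√θ * Real.exp (-a * θ ^ 2) * Real.cos (θ / c) +
        c ^ 2 * (sqrtGaussDerivTwo a θ * Real.cos (θ / c))) θ := by
    intro θ hθ
    have hθ₀ : 0 < θ := hc.trans_le hθ
    have hdiv := (hasDerivAt_id' θ).div_const c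
    refine ((((hasDerivAt_sqrtGauss a hθ₀).mul hdiv.sin).const_mul c).add
      (((hasDerivAt_sqrtGaussDeriv a hθ₀).mul hdiv.cos).const_mul (c ^ 2))).congr_deriv ?_
    field_simp
    ring
  have hlim : Tendsto (fun θ => c * (√θ * Real.exp (-a * θ ^ 2) * Real.sin (θ / c)) +
      c ^ 2 * (sqrtGaussDeriv a θ * Real.cos (θ / c))) atTop (𝓝 0) := by
    have h₁ : Tendsto (fun θ => √θ * Real.exp (-a * θ ^ 2) * Real.sin (θ / c)) atTop (𝓝 0) := by
      refine squeeze_zero_norm' ?_ (by simpa using tendsto_inv_sqrt_atTop.const_mul a⁻¹)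
      filter_upwards [eventually_ge_atTop 1] with θ hθ
      rw [norm_mul, Real.norm_of_nonneg (by positivity)]
      exact (mul_le_of_le_one_right (by positivity) (Real.abs_sin_le_one _)).trans
        (sqrt_mul_exp_le ha hθ)
    have h₂ : Tendsto (fun θ => sqrtGaussDeriv a θ * Real.cos (θ / c)) atTop (𝓝 0) := by
      refine squeeze_zero_norm (fun θ => ?_) (by simpa using tendsto_inv_sqrt_atTop.const_mul 3)
      rw [norm_mul]
      exact (mul_le_of_le_one_right (norm_nonneg _) (Real.abs_cos_le_one _)).trans
        (abs_sqrtGaussDeriv_le ha)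
    simpa using (h₁.const_mul c).add (h₂.const_mul (c ^ 2))
  have h := integral_Ioi_of_hasDerivAt_of_tendsto' hderiv (hint.add hint₂) hlim
  rw [integral_add hint hint₂, integral_const_mul, div_self hc.ne'] at h
  linarith

lemma abs_integral_sqrtGauss_mul_cos_le {a c : ℝ} (ha : 0 < a) (hc : 0 < c) :
    |∫ θ in Ioi (0:ℝ), √θ * Real.exp (-a * θ ^ 2) * Real.cos (θ / c)| ≤ 21 * (c * √c) := by
  have hint := integrableOn_sqrtGauss_mul_cos ha c
  have hexp : ∀ θ : ℝ, Real.exp (-a * θ ^ 2) ≤ 1 := fun θ =>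
    Real.exp_le_one_iff.2 (by nlinarith [sq_nonneg θ])
  have hnear : |∫ θ in Ioc 0 c, √θ * Real.exp (-a * θ ^ 2) * Real.cos (θ / c)| ≤ c * √c := by
    have h := norm_setIntegral_le_of_norm_le_const (μ := volume) (s := Ioc 0 c) (C := √c)
      (f := fun θ => √θ * Real.exp (-a * θ ^ 2) * Real.cos (θ / c)) (by simp) fun θ hθ => by
        rw [norm_mul, Real.norm_of_nonneg (by positivity)]
        exact (mul_le_of_le_one_right (by positivity) (Real.abs_cos_le_one _)).trans
          ((mul_le_of_le_one_right (by positivity) (hexp θ)).trans (Real.sqrt_le_sqrt hθ.2))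
    rw [Real.norm_eq_abs, Real.volume_real_Ioc_of_le hc.le, sub_zero] at h
    linarith
  have hsc : c * (√c)⁻¹ = √c := by
    rw [← div_eq_mul_inv, Real.div_sqrt]
  have hb₁ : |c * (√c * Real.exp (-a * c ^ 2) * Real.sin 1)| ≤ c * √c := by
    rw [abs_mul, abs_mul, abs_of_pos hc, abs_of_nonneg (a := √c * _) (by positivity)]
    gcongr
    exact (mul_le_of_le_one_right (by positivity) (Real.abs_sin_le_one _)).trans
      (mul_le_of_le_one_right (by positivity) (hexp c))
  have hb₂ : |c ^ 2 * (sqrtGaussDeriv a c * Real.cos 1)| ≤ 3 * (c * √c) := by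
    rw [abs_mul, abs_mul, abs_of_pos (by positivity : 0 < c ^ 2)]
    calc _ ≤ c ^ 2 * (3 * (√c)⁻¹) := by
          refine mul_le_mul_of_nonneg_left ?_ (by positivity)
          exact (mul_le_of_le_one_right (abs_nonneg _) (Real.abs_cos_le_one _)).trans
            (abs_sqrtGaussDeriv_le ha)
      _ = 3 * (c * (c * (√c)⁻¹)) := by ring
      _ = _ := by rw [hsc]
  have hb₃ : |c ^ 2 * ∫ θ in Ioi c, sqrtGaussDerivTwo a θ * Real.cos (θ / c)|
      ≤ 16 * (c * √c) := by
    rw [abs_mul, abs_of_pos (by positivity : 0 < c ^ 2)]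
    calc _ ≤ c ^ 2 * (16 * (√c)⁻¹) := by
          gcongr
          exact (integrableOn_sqrtGaussDerivTwo_mul ha hc).2
      _ = 16 * (c * (c * (√c)⁻¹)) := by ring
      _ = _ := by rw [hsc]
  rw [← Ioc_union_Ioi_eq_Ioi hc.le, setIntegral_union Ioc_disjoint_Ioi_same measurableSet_Ioi
    (hint.mono_set Ioc_subset_Ioi_self) (hint.mono_set (Ioi_subset_Ioi hc.le)),
    integral_Ioi_sqrtGauss_mul_cos_eq ha hc]
  rw [abs_le] at *
  constructor <;> linarith

lemma sq_sqrtDheat_mul_space_le {s : ℝ} (hs : 0 < s) (x : ℝ) :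
    sqrtDheat s x ^ 2 * |x| ^ 3 ≤ 1764 := by
  rcases eq_or_ne x 0 with rfl | hx
  · simp
  have hx' : 0 < |x| := abs_pos.2 hx
  set c := (2 * Real.pi * |x|)⁻¹ with hc_def
  have hc : 0 < c := by positivity
  have h := abs_integral_sqrtGauss_mul_cos_le (a := 4 * Real.pi ^ 2 * s) (by positivity) hc
  have hdiv : ∀ θ, θ / c = 2 * Real.pi * |x| * θ := fun θ => by
    rw [hc_def, div_inv_eq_mul, mul_comm]
  simp only [hdiv] at h
  have hsq := sq_le_sq' (neg_le_of_abs_le h) (le_of_abs_le h)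
  have hcx : c * |x| ≤ 1 := by
    have : c * |x| = (2 * Real.pi)⁻¹ := by
      rw [hc_def]
      field_simp
    rw [this]
    exact inv_le_one_of_one_le₀ (by linarith [Real.pi_gt_three])
  rw [sqrtDheat_eq hs, mul_pow]
  calc _ ≤ 2 ^ 2 * (21 * (c * √c)) ^ 2 * |x| ^ 3 := by gcongr
    _ = 1764 * (c ^ 2 * √c ^ 2 * |x| ^ 3) := by ring
    _ = 1764 * (c * |x|) ^ 3 := by rw [Real.sq_sqrt hc.le]; ring
    _ ≤ 1764 * 1 := by
        gcongr
        exact pow_le_one₀ (by positivity) hcx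
    _ = 1764 := by norm_num

/-- The Peetre-type weight inequality. -/
lemma one_add_sq_le_two_mul (y z : ℝ) : 1 + y ^ 2 ≤ 2 * (1 + z ^ 2) * (1 + (y - z) ^ 2) := by
  nlinarith [sq_nonneg (y - 2 * z), sq_nonneg (z * (y - z))]

lemma sq_rpow_three_halves {r : ℝ} (hr : 0 ≤ r) : (r ^ 2) ^ ((3:ℝ) / 2) = r ^ 3 := by
  rw [← Real.rpow_natCast, ← Real.rpow_mul hr, ← Real.rpow_natCast]
  norm_num

lemma exists_weight_mul_exp_le {lam : ℝ} (hlam : 0 < lam) :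
    ∃ M : ℝ, 0 < M ∧ ∀ z : ℝ, (1 + z ^ 2) ^ ((3:ℝ) / 2) * Real.exp (-lam * |z|) ≤
      M * Real.exp (-(lam / 2) * |z|) := by
  refine ⟨(1 + 6 / lam) ^ 3, by positivity, fun z => ?_⟩
  have hz := abs_nonneg z
  have hweight : (1 + z ^ 2) ^ ((3:ℝ) / 2) ≤ (1 + |z|) ^ 3 := by
    rw [← sq_rpow_three_halves (by positivity)]
    gcongr
    nlinarith [sq_abs z]
  have hlin : 1 + |z| ≤ (1 + 6 / lam) * Real.exp (lam / 6 * |z|) := by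
    calc 1 + |z| ≤ 1 + |z| + (lam / 6 * |z| + 6 / lam) := by
          have : 0 ≤ lam / 6 * |z| + 6 / lam := by positivity
          linarith
      _ = (1 + 6 / lam) * (lam / 6 * |z| + 1) := by field_simp; ring
      _ ≤ _ := by
          gcongr
          exact Real.add_one_le_exp _
  calc _ ≤ ((1 + 6 / lam) * Real.exp (lam / 6 * |z|)) ^ 3 * Real.exp (-lam * |z|) := by
        gcongr
        exact hweight.trans (by gcongr)
    _ = (1 + 6 / lam) ^ 3 * (Real.exp (3 * (lam / 6 * |z|)) * Real.exp (-lam * |z|)) := by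
        rw [mul_pow, ← Real.exp_nat_mul, mul_assoc]
        norm_num
    _ = _ := by
        rw [← Real.exp_add]
        ring_nf

lemma integral_exp_neg_mul_abs {b : ℝ} (hb : 0 < b) :
    ∫ z : ℝ, Real.exp (-b * |z|) = 2 / b := by
  rw [integral_comp_abs (f := fun z => Real.exp (-b * z)), integral_exp_mul_Ioi (by linarith)]
  simp
  ring

lemma integrable_exp_neg_mul_abs {b : ℝ} (hb : 0 < b) :
    Integrable (fun z : ℝ => Real.exp (-b * |z|)) :=
  Integrable.of_integral_ne_zero (by rw [integral_exp_neg_mul_abs hb]; positivity)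

lemma integral_inv_sqrt_mul_add_sq {t : ℝ} (ht : 0 < t) (y : ℝ) :
    ∫ z : ℝ, (√t * (t + (y - z) ^ 2))⁻¹ = Real.pi / t := by
  have hs : 0 < √t := Real.sqrt_pos.2 ht
  have hst : √t ^ 2 = t := Real.sq_sqrt ht.le
  have heq : ∀ w : ℝ, (√t * (t + w ^ 2))⁻¹ = (√t * t)⁻¹ * (1 + ((√t)⁻¹ * w) ^ 2)⁻¹ := by
    intro w
    rw [← mul_inv, mul_pow, inv_pow, hst]
    field_simp
  rw [integral_sub_left_eq_self (fun w => (√t * (t + w ^ 2))⁻¹) volume y]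
  simp_rw [heq]
  rw [integral_const_mul, Measure.integral_comp_mul_left (fun w => (1 + w ^ 2)⁻¹),
    integral_univ_inv_one_add_sq, inv_inv, abs_of_pos hs, smul_eq_mul]
  field_simp

lemma integrable_inv_sqrt_mul_add_sq {t : ℝ} (ht : 0 < t) (y : ℝ) :
    Integrable (fun z : ℝ => (√t * (t + (y - z) ^ 2))⁻¹) :=
  Integrable.of_integral_ne_zero (by rw [integral_inv_sqrt_mul_add_sq ht]; positivity)

lemma exists_sq_sqrtDheat_le :
    ∃ K : ℝ, 0 < K ∧ ∀ t > 0, ∀ w,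
      (1 + w ^ 2) ^ ((3:ℝ) / 2) * sqrtDheat t w ^ 2 ≤ K * (1 + (√t * (t + w ^ 2))⁻¹) := by
  obtain ⟨K, hK, htime⟩ := exists_sq_sqrtDheat_mul_time_le
  refine ⟨8 * (2 * K + 1764), by positivity, fun t ht w => ?_⟩
  have hs : 0 < √t := Real.sqrt_pos.2 ht
  have hst : √t ^ 2 = t := Real.sq_sqrt ht.le
  have hspace := sq_sqrtDheat_mul_space_le ht w
  have htime := htime t ht w
  have hinv : 0 < (√t * (t + w ^ 2))⁻¹ := by positivity
  rcases le_total 1 |w| with hw | hw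
  · have hweight : (1 + w ^ 2) ^ ((3:ℝ) / 2) ≤ 8 * |w| ^ 3 := by
      rw [show 8 * |w| ^ 3 = (2 * |w|) ^ 3 by ring, ← sq_rpow_three_halves (by positivity)]
      gcongr
      nlinarith [sq_abs w]
    calc _ ≤ 8 * |w| ^ 3 * sqrtDheat t w ^ 2 := by gcongr
      _ ≤ 8 * (2 * K + 1764) * 1 := by linarith
      _ ≤ _ := by gcongr; linarith
  · have hweight : (1 + w ^ 2) ^ ((3:ℝ) / 2) ≤ 8 := by
      rw [show (8:ℝ) = 2 ^ 3 by norm_num, ← sq_rpow_three_halves zero_le_two]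
      gcongr
      nlinarith [sq_abs w, abs_nonneg w]
    have hcross : sqrtDheat t w ^ 2 * (√t * w ^ 2) ≤ K + 1764 := by
      rcases le_total |w| (√t) with h | h
      · have : w ^ 2 ≤ t := by
          rw [← sq_abs, ← hst]
          gcongr
        calc _ ≤ sqrtDheat t w ^ 2 * (√t * t) := by gcongr
          _ ≤ _ := by linarith [mul_comm t √t]
      · calc _ ≤ sqrtDheat t w ^ 2 * (|w| * w ^ 2) := by gcongr
          _ = sqrtDheat t w ^ 2 * |w| ^ 3 := by rw [← sq_abs w]; ring
          _ ≤ _ := by linarith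
    have hmain : sqrtDheat t w ^ 2 ≤ (2 * K + 1764) * (√t * (t + w ^ 2))⁻¹ := by
      rw [← div_eq_mul_inv, le_div_iff₀ (by positivity)]
      linarith
    calc _ ≤ 8 * ((2 * K + 1764) * (√t * (t + w ^ 2))⁻¹) := by gcongr
      _ = 8 * (2 * K + 1764) * (√t * (t + w ^ 2))⁻¹ := by ring
      _ ≤ _ := by gcongr; linarith

lemma exists_integral_exp_mul_sq_sqrtDheat_le {lam : ℝ} (hlam : 0 < lam) :
    ∃ K : ℝ, 0 < K ∧ ∀ t > 0, ∀ y,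
      ∫ z : ℝ, Real.exp (-lam * |z|) * sqrtDheat t (y - z) ^ 2 ≤
        K * (1 + 1 / t) * (1 + y ^ 2) ^ (-(3:ℝ) / 2) := by
  obtain ⟨M, hM, hexp⟩ := exists_weight_mul_exp_le hlam
  obtain ⟨K, hK, hheat⟩ := exists_sq_sqrtDheat_le
  refine ⟨8 * M * K * (4 / lam + Real.pi), by positivity, fun t ht y => ?_⟩
  set Q := (1 + y ^ 2) ^ (-(3:ℝ) / 2) with hQ
  have hQpos : 0 < Q := by positivity
  have hPQ : (1 + y ^ 2) ^ ((3:ℝ) / 2) * Q = 1 := by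
    rw [hQ, ← Real.rpow_add (by positivity)]
    norm_num
  have hpt : ∀ z, Real.exp (-lam * |z|) * sqrtDheat t (y - z) ^ 2 ≤
      8 * M * K * Q * (Real.exp (-(lam / 2) * |z|) + (√t * (t + (y - z) ^ 2))⁻¹) := by
    intro z
    have hweight : (1 + y ^ 2) ^ ((3:ℝ) / 2) ≤
        8 * ((1 + z ^ 2) ^ ((3:ℝ) / 2) * (1 + (y - z) ^ 2) ^ ((3:ℝ) / 2)) := by
      rw [← Real.mul_rpow (by positivity) (by positivity), show (8:ℝ) = 2 ^ 3 by norm_num,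
        ← sq_rpow_three_halves zero_le_two, ← Real.mul_rpow (by positivity) (by positivity)]
      gcongr
      have h₀ : 0 ≤ (1 + z ^ 2) * (1 + (y - z) ^ 2) := by positivity
      linarith [one_add_sq_le_two_mul y z]
    have hE : Real.exp (-(lam / 2) * |z|) ≤ 1 :=
      Real.exp_le_one_iff.2 (by nlinarith [abs_nonneg z, mul_nonneg hlam.le (abs_nonneg z)])
    have hinv : 0 < (√t * (t + (y - z) ^ 2))⁻¹ := by positivity
    calc _ = (1 + y ^ 2) ^ ((3:ℝ) / 2) * Q *
          (Real.exp (-lam * |z|) * sqrtDheat t (y - z) ^ 2) := by rw [hPQ, one_mul]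
      _ ≤ 8 * ((1 + z ^ 2) ^ ((3:ℝ) / 2) * (1 + (y - z) ^ 2) ^ ((3:ℝ) / 2)) * Q *
          (Real.exp (-lam * |z|) * sqrtDheat t (y - z) ^ 2) := by gcongr
      _ = 8 * Q * (((1 + z ^ 2) ^ ((3:ℝ) / 2) * Real.exp (-lam * |z|)) *
          ((1 + (y - z) ^ 2) ^ ((3:ℝ) / 2) * sqrtDheat t (y - z) ^ 2)) := by ring
      _ ≤ 8 * Q * ((M * Real.exp (-(lam / 2) * |z|)) *
          (K * (1 + (√t * (t + (y - z) ^ 2))⁻¹))) := by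
          refine mul_le_mul_of_nonneg_left ?_ (by positivity)
          exact mul_le_mul (hexp z) (hheat t ht (y - z)) (by positivity) (by positivity)
      _ = 8 * M * K * Q * (Real.exp (-(lam / 2) * |z|) +
          Real.exp (-(lam / 2) * |z|) * (√t * (t + (y - z) ^ 2))⁻¹) := by ring
      _ ≤ _ := by
          gcongr
          exact mul_le_of_le_one_left hinv.le hE
  have hi₁ := integrable_exp_neg_mul_abs (half_pos hlam)
  have hi₂ := integrable_inv_sqrt_mul_add_sq ht y
  calc _ ≤ ∫ z, 8 * M * K * Q *
        (Real.exp (-(lam / 2) * |z|) + (√t * (t + (y - z) ^ 2))⁻¹) :=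
        integral_mono_of_nonneg (ae_of_all _ fun z => by positivity)
          ((hi₁.add hi₂).const_mul _) (ae_of_all _ hpt)
    _ = 8 * M * K * Q * (4 / lam + Real.pi / t) := by
        rw [integral_const_mul, integral_add hi₁ hi₂, integral_exp_neg_mul_abs (half_pos hlam),
          integral_inv_sqrt_mul_add_sq ht]
        congr 2
        field_simp
        norm_num
    _ ≤ 8 * M * K * Q * ((4 / lam + Real.pi) * (1 + 1 / t)) := by
        gcongr
        have h₁ : 0 < 4 / lam * (1 / t) := by positivity
        have h₂ : Real.pi / t = Real.pi * (1 / t) := by ring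
        linarith [Real.pi_pos]
    _ = _ := by ring

lemma integral_one_add_inv_add_sq_le {δ : ℝ} (hδ : δ ∈ Ioc (0:ℝ) (1 / 2)) :
    ∫ s in (0:ℝ)..1, (1 + 1 / (s + δ ^ 2)) ≤ 5 * Real.log (1 / δ) := by
  obtain ⟨hδ₀, hδ₁⟩ := hδ
  have hsq : 0 < δ ^ 2 := by positivity
  have hint : IntervalIntegrable (fun s : ℝ => 1 / (s + δ ^ 2)) volume 0 1 := by
    refine ContinuousOn.intervalIntegrable fun s hs => ?_
    rw [uIcc_of_le zero_le_one] at hs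
    have : s + δ ^ 2 ≠ 0 := by linarith [hs.1]
    exact ContinuousAt.continuousWithinAt (by fun_prop (disch := assumption))
  rw [intervalIntegral.integral_add (by simp) hint,
    intervalIntegral.integral_comp_add_right (fun s => 1 / s),
    integral_one_div_of_pos (by positivity) (by positivity)]
  have hlog : Real.log ((1 + δ ^ 2) / (0 + δ ^ 2)) ≤ 3 * Real.log (1 / δ) := by
    rw [show 3 * Real.log (1 / δ) = Real.log ((1 / δ) ^ 3) by rw [Real.log_pow]; norm_num]
    apply Real.log_le_log (by positivity)
    rw [zero_add, one_div, inv_pow, ← one_div, div_le_div_iff₀ hsq (by positivity)]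
    have hle : (1 + δ ^ 2) * δ ≤ 1 := by nlinarith
    nlinarith
  have htwo : Real.log 2 ≤ Real.log (1 / δ) := by
    apply Real.log_le_log two_pos
    rw [le_div_iff₀ hδ₀]
    linarith
  have := Real.log_two_gt_d9
  simp only [intervalIntegral.integral_const, sub_zero, smul_eq_mul, mul_one]
  linarith

/-- Weighted space-time square bound with logarithmic divergence:
`∫_0^1 ∫ e^{−λ|z|} |(√𝔇 q_{s+δ²})(y−z)|² dz ds ≲ log(1/δ) ⟨y⟩^{−3}`. -/
theorem stmt_15 (lam : ℝ) (hlam : 0 < lam) :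
    ∃ C > (0:ℝ), ∀ δ ∈ Set.Ioc (0:ℝ) (1/2), ∀ y : ℝ,
      (∫ s in (0:ℝ)..1, ∫ z : ℝ, Real.exp (-lam * |z|) * (sqrtDheat (s + δ ^ 2) (y - z)) ^ 2)
        ≤ C * Real.log (1 / δ) * (1 + y ^ 2) ^ (-(3:ℝ)/2) := by
  obtain ⟨K, hK, hinner⟩ := exists_integral_exp_mul_sq_sqrtDheat_le hlam
  refine ⟨K * 5, by positivity, fun δ hδ y => ?_⟩
  have hsq : 0 < δ ^ 2 := pow_pos hδ.1 2
  set Q := (1 + y ^ 2) ^ (-(3:ℝ) / 2)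
  have hQpos : 0 < Q := by positivity
  have hint : IntervalIntegrable (fun s : ℝ => K * (1 + 1 / (s + δ ^ 2)) * Q) volume 0 1 := by
    refine ContinuousOn.intervalIntegrable fun s hs => ?_
    rw [uIcc_of_le zero_le_one] at hs
    have : s + δ ^ 2 ≠ 0 := by linarith [hs.1]
    exact ContinuousAt.continuousWithinAt (by fun_prop (disch := assumption))
  calc _ ≤ ∫ s in (0:ℝ)..1, K * (1 + 1 / (s + δ ^ 2)) * Q := by
        rw [intervalIntegral.integral_of_le zero_le_one,
          intervalIntegral.integral_of_le zero_le_one]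
        refine integral_mono_of_nonneg
          (ae_of_all _ fun s => integral_nonneg fun z => by positivity) hint.1 ?_
        filter_upwards [ae_restrict_mem measurableSet_Ioc] with s hs
        exact hinner _ (by linarith [hs.1]) y
    _ = K * (∫ s in (0:ℝ)..1, (1 + 1 / (s + δ ^ 2))) * Q := by
        rw [intervalIntegral.integral_mul_const, intervalIntegral.integral_const_mul]
    _ ≤ K * (5 * Real.log (1 / δ)) * Q := by
        gcongr
        exact integral_one_add_inv_add_sq_le hδ
    _ = _ := by ring
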